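/- Let G=(V,E) and G'=(V',E') be finite connected simple graphs with nonempty vertex sets such that G is a subgraph of G' (V ⊆ V' and E ⊆ E'), and let γ(G), γ(G') be their growth rates. Then γ(G) ≤ γ(G'), and γ(G) = γ(G') if and only if G = G' (i.e. V = V' and E = E'). -/

import Mathlib

open MeasureTheory Filter Topology
open scoped ENNReal Classical

/-- The ballistic deposition height process on a graph `G`, started from `h0`,
driven by the sequence of chosen vertices `X`. -/
noncomputable def heightProcess {V : Type*} [Fintype V] (G : SimpleGraph V)
    (h0 : V → ℕ) (X : ℕ → V) : ℕ → V → ℕ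
  | 0 => h0
  | n + 1 => fun x =>
      if x = X n then
        1 + Finset.univ.sup (fun y =>
          if y = x ∨ G.Adj x y then heightProcess G h0 X n y else 0)
      else heightProcess G h0 X n x

/-- `X` is an i.i.d. sequence of uniformly distributed `V`-valued random variables on `(Ω, μ)`:
every finite cylinder event has the product-of-uniform probabilities. -/
def IsUniformIID {V : Type*} [Fintype V] {Ω : Type*} [MeasurableSpace Ω]
    (μ : Measure Ω) (X : ℕ → Ω → V) : Prop :=
  (∀ (n : ℕ) (v : V), MeasurableSet {ω | X n ω = v}) ∧
  (∀ (n : ℕ) (f : ℕ → V), μ {ω | ∀ k < n, X k ω = f k} = (Fintype.card V : ℝ≥0∞)⁻¹ ^ n)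

/-- `γ` is the growth rate of `G`: `γ > 0` and, for any i.i.d. uniform driving sequence,
almost surely `(#V/n) · max_x H_{x,n} → γ` and `(#V/n) · min_x H_{x,n} → γ`. -/
def IsGrowthRate {V : Type*} [Fintype V] (G : SimpleGraph V) (γ : ℝ) : Prop :=
  0 < γ ∧
  ∀ {Ω : Type} [MeasurableSpace Ω] (μ : Measure Ω) [IsProbabilityMeasure μ]
    (X : ℕ → Ω → V), IsUniformIID μ X →
    (∀ᵐ ω ∂μ, Tendsto (fun n : ℕ =>
        (Fintype.card V : ℝ) *
          (⨆ x : V, (heightProcess G (fun _ => 0) (fun k => X k ω) n x : ℝ)) / n)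
      atTop (𝓝 γ)) ∧
    (∀ᵐ ω ∂μ, Tendsto (fun n : ℕ =>
        (Fintype.card V : ℝ) *
          (⨅ x : V, (heightProcess G (fun _ => 0) (fun k => X k ω) n x : ℝ)) / n)
      atTop (𝓝 γ))


namespace BD
variable {V : Type*} [Fintype V]

/-- One deposition step at `v`. -/
noncomputable def stp (G : SimpleGraph V) (v : V) (h : V → ℕ) : V → ℕ := fun x =>
  if x = v then 1 + Finset.univ.sup (fun y => if y = x ∨ G.Adj x y then h y else 0) else h x

/-- Running a finite word. -/
noncomputable def run (G : SimpleGraph V) : List V → (V → ℕ) → (V → ℕ)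
  | [], h => h
  | v :: w, h => run G w (stp G v h)

lemma hp_succ (G : SimpleGraph V) (h0 : V → ℕ) (X : ℕ → V) (n : ℕ) :
    heightProcess G h0 X (n + 1) = stp G (X n) (heightProcess G h0 X n) := rfl

lemma stp_ne {G : SimpleGraph V} {v x : V} (h : V → ℕ) (hx : x ≠ v) : stp G v h x = h x := by
  simp [stp, hx]

lemma stp_ge {G : SimpleGraph V} {x y : V} (h : V → ℕ) (hy : y = x ∨ G.Adj x y) :
    h y + 1 ≤ stp G x h x := by
  have := Finset.le_sup (f := fun y => if y = x ∨ G.Adj x y then h y else 0) (Finset.mem_univ y)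
  simp only [if_pos hy] at this
  simp only [stp, if_true]
  omega

lemma stp_le {G : SimpleGraph V} {x : V} (h : V → ℕ) (M : ℕ)
    (hy : ∀ y, y = x ∨ G.Adj x y → h y ≤ M) : stp G x h x ≤ M + 1 := by
  simp only [stp, if_true]
  have : Finset.univ.sup (fun y => if y = x ∨ G.Adj x y then h y else 0) ≤ M := by
    apply Finset.sup_le
    intro y _
    split_ifs with hh
    · exact hy y hh
    · exact Nat.zero_le _
  omega

lemma stp_infl (G : SimpleGraph V) (v : V) (h : V → ℕ) (x : V) : h x ≤ stp G v h x := by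
  by_cases hx : x = v
  · subst hx
    have := stp_ge (G := G) h (Or.inl (rfl : x = x))
    omega
  · rw [stp_ne h hx]

lemma stp_mono {G G' : SimpleGraph V} (hG : ∀ x y, G.Adj x y → G'.Adj x y) (v : V)
    {h h' : V → ℕ} {k : ℕ} (hh : ∀ x, h x + k ≤ h' x) (x : V) :
    stp G v h x + k ≤ stp G' v h' x := by
  by_cases hx : x = v
  · subst hx
    have h1 := stp_ge (G := G') h' (Or.inl (rfl : x = x))
    have h3 := hh x
    have h2 : stp G x h x ≤ (stp G' x h' x - 1 - k) + 1 := by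
      apply stp_le
      intro y hy
      have := stp_ge (G := G') h' (hy.imp id (hG _ _))
      have := hh y
      omega
    omega
  · rw [stp_ne h hx, stp_ne h' hx]; exact hh x

lemma run_append (G : SimpleGraph V) (u w : List V) (h : V → ℕ) :
    run G (u ++ w) h = run G w (run G u h) := by
  induction u generalizing h with
  | nil => rfl
  | cons v u ih => exact ih _

lemma run_infl (G : SimpleGraph V) (w : List V) (h : V → ℕ) (x : V) : h x ≤ run G w h x := by
  induction w generalizing h with
  | nil => exact le_rfl
  | cons v u ih => exact (stp_infl G v h x).trans (ih _)

lemma run_le (G : SimpleGraph V) (w : List V) (h : V → ℕ) (M : ℕ) (hM : ∀ x, h x ≤ M) (x : V) :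
    run G w h x ≤ M + w.length := by
  induction w generalizing h M with
  | nil => exact hM x
  | cons v u ih =>
    have := ih (stp G v h) (M + 1) (by
      intro y
      by_cases hy : y = v
      · subst hy
        exact stp_le h M (fun z _ => hM z)
      · rw [stp_ne h hy]; have := hM y; omega)
    simp only [run, List.length_cons]
    omega

lemma exists_spread_pair (G : SimpleGraph V) {x y : V} (hxy : G.Reachable x y) :
    ∃ w : List V, ∀ h : V → ℕ, h x ≤ run G w h y := by
  obtain ⟨p⟩ := hxy
  induction p with
  | nil => exact ⟨[], fun h => le_rfl⟩
  | @cons u v w huv p ih =>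
    obtain ⟨l, hl⟩ := ih
    refine ⟨v :: l, fun h => ?_⟩
    have h1 := stp_ge (G := G) h (Or.inr huv.symm)
    have h2 := hl (stp G v h)
    simp only [run]
    omega

lemma exists_spread (G : SimpleGraph V) (hG : G.Connected) :
    ∃ w : List V, ∀ (h : V → ℕ) (x y : V), h x ≤ run G w h y := by
  have key : ∀ S : Finset (V × V), ∃ w : List V, ∀ p ∈ S, ∀ h : V → ℕ,
      h p.1 ≤ run G w h p.2 := by
    intro S
    induction S using Finset.induction_on with
    | empty => exact ⟨[], by simp⟩
    | insert p S _ ih =>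
      obtain ⟨T, hT⟩ := ih
      obtain ⟨w, hw⟩ := exists_spread_pair G (hG.preconnected p.1 p.2)
      refine ⟨T ++ w, fun q hq h => ?_⟩
      rw [run_append]
      rcases Finset.mem_insert.1 hq with rfl | hq
      · exact (run_infl G T h _).trans (hw _)
      · exact (hT q hq h).trans (run_infl G w _ _)
  obtain ⟨w, hw⟩ := key Finset.univ
  exact ⟨w, fun h x y => hw (x, y) (Finset.mem_univ _) h⟩

/-- The alternating word. -/
def alt (a b : V) : ℕ → List V
  | 0 => []
  | n + 1 => a :: b :: alt a b n

lemma alt_ge (G : SimpleGraph V) {a b : V} (hab : G.Adj a b) (K : ℕ) (h : V → ℕ) :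
    h b + 2 * K ≤ run G (alt a b K) h b := by
  induction K generalizing h with
  | zero => exact le_rfl
  | succ K ih =>
    simp only [alt, run]
    have h1 := stp_ge (G := G) h (Or.inr hab)
    have h2 := stp_ge (G := G) (stp G a h) (Or.inr hab.symm)
    have := ih (stp G b (stp G a h))
    omega

lemma alt_le (G : SimpleGraph V) {a b : V} (hne : a ≠ b) (hab : ¬ G.Adj a b) (K M j : ℕ)
    (h : V → ℕ) (h1 : ∀ x, x ≠ a → x ≠ b → h x ≤ M) (ha : h a ≤ M + j) (hb : h b ≤ M + j)
    (x : V) : run G (alt a b K) h x ≤ M + j + K := by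
  induction K generalizing h j with
  | zero =>
    simp only [alt, run]
    by_cases hxa : x = a
    · subst hxa; omega
    by_cases hxb : x = b
    · subst hxb; omega
    have := h1 x hxa hxb
    omega
  | succ K ih =>
    simp only [alt, run]
    have e1 : stp G a h a ≤ M + j + 1 := by
      apply stp_le
      rintro y (rfl | hy)
      · exact ha
      · have := h1 y hy.ne' (by rintro rfl; exact hab hy)
        omega
    have e2 : stp G b (stp G a h) b ≤ M + j + 1 := by
      apply stp_le
      rintro y (rfl | hy)
      · rw [stp_ne h hne.symm]; exact hb
      · have hya : y ≠ a := by rintro rfl; exact hab hy.symm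
        have := h1 y hya hy.ne'
        rw [stp_ne h hya]
        omega
    have := ih (j + 1) (stp G b (stp G a h)) (by
        intro z hza hzb
        rw [stp_ne _ hzb, stp_ne _ hza]
        exact h1 z hza hzb) (by rw [stp_ne _ hne]; omega) (by omega)
    omega

/-- A word along which the gap between the two processes strictly increases. -/
lemma exists_gain (G G' : SimpleGraph V) (hG' : G'.Connected) {a b : V} (hab : ¬ G.Adj a b)
    (hab' : G'.Adj a b) :
    ∃ Q : List V, Q ≠ [] ∧ ∀ (h h' : V → ℕ) (k : ℕ), (∀ x, h x + k ≤ h' x) →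
      ∀ x, run G Q h x + (k + 1) ≤ run G' Q h' x := by
  obtain ⟨T, hT⟩ := exists_spread G' hG'
  refine ⟨T ++ alt a b (2 * T.length + 1) ++ T, by simp [alt], fun h h' k hk x => ?_⟩
  rw [run_append, run_append, run_append, run_append]
  obtain ⟨x0, -, hx0⟩ := Finset.exists_max_image Finset.univ h ⟨a, Finset.mem_univ a⟩
  have u1 := run_le G T h (h x0) (fun y => hx0 y (Finset.mem_univ y))
  have u2 := alt_le G hab'.ne hab (2 * T.length + 1) (h x0 + T.length) 0 (run G T h)
    (fun y _ _ => u1 y) (u1 a) (u1 b)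
  have u3 := run_le G T _ _ u2 x
  have l1 := hT h' x0 b
  have l2 := alt_ge G' hab' (2 * T.length + 1) (run G' T h')
  have l3 := hT (run G' (alt a b (2 * T.length + 1)) (run G' T h')) b x
  have := hk x0
  omega

lemma hp_mono {G G' : SimpleGraph V} (hG : ∀ x y, G.Adj x y → G'.Adj x y) (h0 : V → ℕ)
    (X : ℕ → V) (m k n : ℕ)
    (h : ∀ x, heightProcess G h0 X m x + k ≤ heightProcess G' h0 X m x) (x : V) :
    heightProcess G h0 X (m + n) x + k ≤ heightProcess G' h0 X (m + n) x := by
  induction n generalizing x with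
  | zero => exact h x
  | succ n ih =>
    rw [← add_assoc, hp_succ, hp_succ]
    exact stp_mono hG _ ih x

lemma hp_run (G : SimpleGraph V) (h0 : V → ℕ) (X : ℕ → V) (w : List V) (m : ℕ)
    (hw : ∀ i (hi : i < w.length), X (m + i) = w[i]) :
    heightProcess G h0 X (m + w.length) = run G w (heightProcess G h0 X m) := by
  induction w generalizing m with
  | nil => rfl
  | cons v w ih =>
    have h0' := hw 0 (by simp)
    simp only [add_zero, List.getElem_cons_zero] at h0'
    have := ih (m + 1) (fun i hi => by
      have := hw (i + 1) (by simpa using hi)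
      simpa [add_assoc, add_comm 1 i] using this)
    simp only [run, List.length_cons]
    rw [← h0', ← hp_succ, ← this]
    congr 1
    omega

/-- Gap after `j` aligned blocks. -/
lemma hp_gap {G G' : SimpleGraph V} (hG : ∀ x y, G.Adj x y → G'.Adj x y) (h0 : V → ℕ)
    (X : ℕ → V) (Q : List V)
    (hQ : ∀ (h h' : V → ℕ) (k : ℕ), (∀ x, h x + k ≤ h' x) →
      ∀ x, run G Q h x + (k + 1) ≤ run G' Q h' x) (j : ℕ) (x : V) :
    heightProcess G h0 X (j * Q.length) x +
      ∑ i ∈ Finset.range j, (if (fun r : Fin Q.length => X (i * Q.length + r)) = Q.get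
        then 1 else 0) ≤ heightProcess G' h0 X (j * Q.length) x := by
  induction j generalizing x with
  | zero => simp [heightProcess]
  | succ j ih =>
    rw [Finset.sum_range_succ]
    split_ifs with hc
    · have hw : ∀ i (hi : i < Q.length), X (j * Q.length + i) = Q[i] := fun i hi =>
        congrFun hc ⟨i, hi⟩
      rw [Nat.succ_mul, hp_run G h0 X Q _ hw, hp_run G' h0 X Q _ hw]
      exact hQ _ _ _ ih x
    · rw [Nat.succ_mul, add_zero]
      exact hp_mono hG h0 X _ _ _ ih x

/-- The graph on `s` seen as a graph on the ambient vertex set. -/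
def ext {s : Set V} (G : SimpleGraph s) : SimpleGraph V where
  Adj x y := ∃ (hx : x ∈ s) (hy : y ∈ s), G.Adj ⟨x, hx⟩ ⟨y, hy⟩
  symm := ⟨fun _ _ ⟨hx, hy, h⟩ => ⟨hy, hx, h.symm⟩⟩
  loopless := ⟨fun _ ⟨_, _, h⟩ => h.ne rfl⟩

lemma stp_ext {s : Set V} (G : SimpleGraph s) (v : s) (h : V → ℕ) (g : s → ℕ)
    (hg : ∀ x : s, h x = g x) (x : s) : stp (ext G) (v : V) h x = stp G v g x := by
  by_cases hx : x = v
  · subst hx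
    apply le_antisymm
    · have h1 := stp_ge (G := G) g (Or.inl (rfl : x = x))
      have h2 : stp (ext G) (x : V) h x ≤ (stp G x g x - 1) + 1 := by
        apply stp_le
        rintro y (rfl | ⟨_, hy, hxy⟩)
        · rw [hg]; omega
        · have h3 : g ⟨y, hy⟩ + 1 ≤ stp G x g x := stp_ge (G := G) g (Or.inr hxy)
          have := hg ⟨y, hy⟩
          simp only at this
          omega
      omega
    · have h1 := stp_ge (G := ext G) h (Or.inl (rfl : (x : V) = x))
      have h2 : stp G x g x ≤ (stp (ext G) (x : V) h x - 1) + 1 := by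
        apply stp_le
        rintro y (rfl | hxy)
        · rw [← hg]; omega
        · have h3 := stp_ge (G := ext G) h (Or.inr ⟨x.2, y.2, hxy⟩)
          have := hg y
          omega
      omega
  · rw [stp_ne g hx, stp_ne h (fun e => hx (Subtype.ext e)), hg]

/-- Merge a sequence in `s` with an ambient one. -/
noncomputable def merge {s : Set V} (Y : ℕ → s) (C : ℕ → V) (n : ℕ) : V :=
  if C n ∈ s then (Y (Nat.count (fun k => C k ∈ s) n) : V) else C n

lemma hp_merge {s : Set V} (G : SimpleGraph s) (Y : ℕ → s) (C : ℕ → V) (n : ℕ) (x : s) :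
    heightProcess (ext G) (fun _ => 0) (merge Y C) n x =
      heightProcess G (fun _ => 0) Y (Nat.count (fun k => C k ∈ s) n) x := by
  induction n generalizing x with
  | zero => rfl
  | succ n ih =>
    rw [hp_succ, Nat.count_succ]
    by_cases hc : C n ∈ s
    · rw [if_pos hc, hp_succ, merge, if_pos hc]
      exact stp_ext G _ _ _ ih x
    · rw [if_neg hc, add_zero, merge, if_neg hc, stp_ne _ (by intro e; exact hc (e ▸ x.2)), ih]

end BD
namespace BD
section prob
open ProbabilityTheory

lemma box {V Ω : Type*} [Fintype V] [Nonempty V] [MeasurableSpace Ω] {μ : Measure Ω}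
    {X : ℕ → Ω → V} (hX : IsUniformIID μ X) (n : ℕ) (t : ℕ → Finset V) :
    μ {ω | ∀ k < n, X k ω ∈ t k} =
      ∏ k ∈ Finset.range n, (((t k).card : ℝ≥0∞) * (Fintype.card V : ℝ≥0∞)⁻¹) := by
  let e : (Fin n → V) → ℕ → V := fun F k => if h : k < n then F ⟨k, h⟩ else Classical.arbitrary V
  have he : ∀ F k (h : k < n), e F k = F ⟨k, h⟩ := fun F k h => by simp [e, h]
  have hset : {ω | ∀ k < n, X k ω ∈ t k} =
      ⋃ F ∈ Fintype.piFinset (fun k : Fin n => t k), {ω | ∀ k < n, X k ω = e F k} := by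
    ext ω
    simp only [Set.mem_ofPred_eq, Set.mem_iUnion, Fintype.mem_piFinset, exists_prop]
    constructor
    · intro h
      exact ⟨fun k => X k ω, fun k => h k k.2, fun k hk => by simp [e, hk]⟩
    · rintro ⟨F, hF, h⟩ k hk
      rw [h k hk, he _ _ hk]
      exact hF ⟨k, hk⟩
  rw [hset, measure_biUnion_finset]
  · simp only [hX.2, Finset.sum_const, Fintype.card_piFinset, nsmul_eq_mul]
    rw [Finset.prod_mul_distrib, Finset.prod_const, Finset.card_range, Nat.cast_prod,
      Finset.prod_range]
  · intro F _ F' _ hne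
    refine Set.disjoint_left.2 fun ω h1 h2 => hne ?_
    ext k
    have := (h1 k k.2).symm.trans (h2 k k.2)
    rwa [he _ _ k.2, he _ _ k.2] at this
  · intro F _
    have : {ω | ∀ k < n, X k ω = e F k} = ⋂ k, ⋂ (_ : k < n), {ω | X k ω = e F k} := by
      ext; simp
    rw [this]
    exact MeasurableSet.iInter fun k => MeasurableSet.iInter fun _ => hX.1 _ _

lemma box_finset {V Ω : Type*} [Fintype V] [Nonempty V] [MeasurableSpace Ω] {μ : Measure Ω}
    {X : ℕ → Ω → V} (hX : IsUniformIID μ X) (S : Finset ℕ) (t : ℕ → Finset V) :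
    μ {ω | ∀ k ∈ S, X k ω ∈ t k} =
      ∏ k ∈ S, (((t k).card : ℝ≥0∞) * (Fintype.card V : ℝ≥0∞)⁻¹) := by
  obtain ⟨n, hn⟩ : ∃ n, S ⊆ Finset.range n := ⟨S.sup id + 1, fun k hk => by
    have := Finset.le_sup (f := id) hk
    simp only [id] at this
    simp; omega⟩
  have h1 := box hX n (fun k => if k ∈ S then t k else Finset.univ)
  have h2 : {ω | ∀ k < n, X k ω ∈ (if k ∈ S then t k else Finset.univ)} =
      {ω | ∀ k ∈ S, X k ω ∈ t k} := by
    ext ω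
    simp only [Set.mem_ofPred_eq]
    constructor
    · intro h k hk
      have := h k (Finset.mem_range.1 (hn hk))
      rwa [if_pos hk] at this
    · intro h k hk
      split_ifs with hkS
      · exact h k hkS
      · exact Finset.mem_univ _
  rw [h2] at h1
  rw [h1, ← Finset.prod_subset hn]
  · exact Finset.prod_congr rfl fun k hk => by rw [if_pos hk]
  · intro k _ hk
    rw [if_neg hk, Finset.card_univ]
    exact ENNReal.mul_inv_cancel (by simp) (by simp)

lemma lln {V Ω : Type*} [Fintype V] [Nonempty V] [MeasurableSpace Ω] {μ : Measure Ω}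
    [IsProbabilityMeasure μ]
    {X : ℕ → Ω → V} (hX : IsUniformIID μ X) (U : Finset V) :
    ∀ᵐ ω ∂μ, Tendsto (fun n : ℕ => (∑ i ∈ Finset.range n,
      (if X i ω ∈ U then (1 : ℝ) else 0)) / n) atTop (𝓝 (U.card / Fintype.card V)) := by
  let _ : MeasurableSpace V := ⊤
  have hm : ∀ i, Measurable (X i) := fun i => by
    refine measurable_to_countable' fun v => hX.1 i v
  have h1 : ∀ i (A : Set V), μ (X i ⁻¹' A) =
      ((A.toFinset.card : ℝ≥0∞) * (Fintype.card V : ℝ≥0∞)⁻¹) := fun i A => by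
    have := box_finset hX {i} (fun _ => A.toFinset)
    simp only [Finset.mem_singleton, forall_eq, Finset.prod_singleton, Set.mem_toFinset] at this
    exact this
  let g : V → ℝ := fun v => if v ∈ U then 1 else 0
  have hg : Measurable g := measurable_from_top
  have hgm : ∀ i, Measurable (fun ω => g (X i ω)) := fun i => hg.comp (hm i)
  have hind : ∀ i j, i ≠ j → IndepFun (X i) (X j) μ := by
    intro i j hij
    rw [indepFun_iff_measure_inter_preimage_eq_mul]
    intro A B _ _
    have := box_finset hX {i, j} (fun k => if k = i then A.toFinset else B.toFinset)
    rw [Finset.prod_pair hij] at this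
    simp only [if_true, if_neg hij.symm] at this
    rw [h1, h1, ← this]
    congr 1
    ext ω
    simp [hij.symm]
  have hid : ∀ i, IdentDistrib (X i) (X 0) μ μ := fun i =>
    ⟨(hm i).aemeasurable, (hm 0).aemeasurable, by
      ext A hA
      rw [Measure.map_apply (hm i) hA, Measure.map_apply (hm 0) hA, h1, h1]⟩
  have hE : ∫ ω, g (X 0 ω) ∂μ = U.card / Fintype.card V := by
    have : (fun ω => g (X 0 ω)) = (X 0 ⁻¹' (U : Set V)).indicator (fun _ => (1 : ℝ)) := by
      ext ω
      simp [g, Set.indicator_apply]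
    rw [this, integral_indicator_const _ (hm 0 trivial), Measure.real, h1]
    simp [div_eq_mul_inv]
  have := strong_law_ae_real (μ := μ) (fun i ω => g (X i ω))
    (by
      refine Integrable.of_bound (hgm 0).aestronglyMeasurable 1 (ae_of_all _ fun ω => ?_)
      simp only [g]; split_ifs <;> simp)
    (fun i j hij => (hind i j hij).comp hg hg)
    (fun i => (hid i).comp hg)
  simp only [hE] at this
  exact this

lemma blocks {V Ω : Type*} [Fintype V] [MeasurableSpace Ω] {μ : Measure Ω}
    {X : ℕ → Ω → V} (hX : IsUniformIID μ X) (l : ℕ) (hl : 0 < l) :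
    IsUniformIID μ (fun j ω => (fun r : Fin l => X (j * l + r) ω)) := by
  refine ⟨fun j F => ?_, fun n F => ?_⟩
  · have : {ω | (fun r : Fin l => X (j * l + r) ω) = F} =
        ⋂ r : Fin l, {ω | X (j * l + r) ω = F r} := by
      ext; simp [funext_iff]
    rw [this]
    exact MeasurableSet.iInter fun r => hX.1 _ _
  · have := hX.2 (n * l) (fun k => F (k / l) ⟨k % l, Nat.mod_lt _ hl⟩)
    rw [show (Fintype.card (Fin l → V) : ℝ≥0∞)⁻¹ ^ n = (Fintype.card V : ℝ≥0∞)⁻¹ ^ (n * l) by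
      rw [Fintype.card_fun, Fintype.card_fin, Nat.cast_pow, ← ENNReal.inv_pow, ← pow_mul,
        mul_comm, ← ENNReal.inv_pow], ← this]
    congr 1
    ext ω
    simp only [Set.mem_ofPred_eq]
    constructor
    · intro h k hk
      have := congrFun (h (k / l) (Nat.div_lt_of_lt_mul (by rwa [mul_comm])))
        ⟨k % l, Nat.mod_lt _ hl⟩
      simp only [Nat.div_add_mod'] at this
      exact this
    · intro h j hj
      ext r
      have h1 : j * l + r < n * l := by
        have := Nat.mul_le_mul_right l (Nat.succ_le_of_lt hj)
        have := r.2
        rw [Nat.succ_mul] at *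
        omega
      have h2 : (j * l + r) / l = j := by
        rw [mul_comm, Nat.mul_add_div hl, Nat.div_eq_of_lt r.2, add_zero]
      have h3 : (j * l + r) % l = r := by
        rw [mul_comm, Nat.mul_add_mod, Nat.mod_eq_of_lt r.2]
      rw [h _ h1]
      simp only [h2, h3]

lemma exists_iid (V : Type) [Fintype V] [Nonempty V] :
    ∃ (_ : MeasurableSpace (ℕ → V)) (μ : Measure (ℕ → V)), IsProbabilityMeasure μ ∧
      IsUniformIID μ (fun k ω => ω k) := by
  let _ : MeasurableSpace V := ⊤
  refine ⟨inferInstance, Measure.infinitePi (fun _ : ℕ => uniformOn (Set.univ : Set V)),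
    inferInstance, ?_, ?_⟩
  · intro n v
    have h : MeasurableSet ({v} : Set V) := MeasurableSpace.measurableSet_top
    exact (measurable_pi_apply (X := fun _ : ℕ => V) n) h
  · intro n f
    have := Measure.infinitePi_pi (fun _ : ℕ => uniformOn (Set.univ : Set V))
      (s := Finset.range n) (t := fun k => {f k}) (fun _ _ => trivial)
    have h2 : {ω : ℕ → V | ∀ k < n, ω k = f k} = (Finset.range n : Set ℕ).pi (fun k => {f k}) := by
      ext; simp [Set.mem_pi]
    rw [h2, this]
    simp [uniformOn_univ]

lemma nth_lemma (p : ℕ → Prop) (n j : ℕ) (h : j < Nat.count p n) :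
    p (Nat.nth p j) ∧ Nat.nth p j < n ∧ Nat.count p (Nat.nth p j) = j := by
  have h1 : Nat.nth p j < n := Nat.nth_lt_of_lt_count h
  have h2 : ∀ hf : (Set.ofPred p).Finite, j < hf.toFinset.card := fun hf => by
    by_contra hc
    exact hc (h.trans_le (Nat.count_le_card hf n))
  exact ⟨Nat.nth_mem j h2, h1, Nat.count_nth h2⟩

lemma merge_iid {V : Type} [Fintype V] [Nonempty V] {s : Set V} [Nonempty s]
    {Ω₁ Ω₂ : Type} [MeasurableSpace Ω₁] [MeasurableSpace Ω₂] {μ : Measure Ω₁} {ν : Measure Ω₂}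
    [IsProbabilityMeasure μ] [IsProbabilityMeasure ν] {Y : ℕ → Ω₁ → s} {C : ℕ → Ω₂ → V}
    (hY : IsUniformIID μ Y) (hC : IsUniformIID ν C) :
    IsUniformIID (μ.prod ν)
      (fun k ω => merge (fun j => Y j ω.1) (fun j => C j ω.2) k) := by
  have key : ∀ (n : ℕ) (f : ℕ → V),
      {ω : Ω₁ × Ω₂ | ∀ k < n, merge (fun j => Y j ω.1) (fun j => C j ω.2) k = f k} =
      {ω | ∀ j < Nat.count (fun k => f k ∈ s) n,
        ((Y j ω : s) : V) = f (Nat.nth (fun k => f k ∈ s) j)} ×ˢ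
      {ω | ∀ k < n, C k ω ∈ (if f k ∈ s then s.toFinset else {f k})} := by
    intro n f
    ext ⟨y, c⟩
    simp only [Set.mem_ofPred_eq, Set.mem_prod]
    have hcnt : (∀ k < n, (C k c ∈ s ↔ f k ∈ s)) → ∀ k ≤ n,
        Nat.count (fun k => C k c ∈ s) k = Nat.count (fun k => f k ∈ s) k := by
      intro hh k hk
      induction k with
      | zero => simp
      | succ k ih =>
        rw [Nat.count_succ, Nat.count_succ, ih (by omega)]
        simp only [hh k (by omega)]
    constructor
    · intro h
      have hh : ∀ k < n, (C k c ∈ s ↔ f k ∈ s) := by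
        intro k hk
        have := h k hk
        unfold merge at this
        split_ifs at this with hc
        · rw [← this]; simp [hc]
        · rw [← this]
      constructor
      · intro j hj
        obtain ⟨h1, h2, h3⟩ := nth_lemma _ _ _ hj
        have h4 := h _ h2
        unfold merge at h4
        rw [if_pos ((hh _ h2).2 h1), hcnt hh _ h2.le, h3] at h4
        exact h4
      · intro k hk
        have h4 := h k hk
        unfold merge at h4
        split_ifs with hf
        · simpa using (hh k hk).2 hf
        · rw [if_neg (fun hc => hf ((hh k hk).1 hc))] at h4
          simpa using h4
    · rintro ⟨h1, h2⟩ k hk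
      have hh : ∀ k < n, (C k c ∈ s ↔ f k ∈ s) := by
        intro k hk
        have := h2 k hk
        split_ifs at this with hf
        · simp only [Set.mem_toFinset] at this
          simp [hf, this]
        · simp only [Finset.mem_singleton] at this
          rw [this]
      have h3 := h2 k hk
      unfold merge
      by_cases hf : f k ∈ s
      · rw [if_pos ((hh k hk).2 hf), hcnt hh k hk.le, h1 _ (Nat.count_strict_mono hf hk)]
        rw [Nat.nth_count (p := fun k => f k ∈ s) hf]
      · rw [if_neg (fun hc => hf ((hh k hk).1 hc))]
        rw [if_neg hf] at h3
        simpa using h3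
  have hmeas : ∀ (n : ℕ) (f : ℕ → V), MeasurableSet
      {ω : Ω₁ × Ω₂ | ∀ k < n, merge (fun j => Y j ω.1) (fun j => C j ω.2) k = f k} := by
    intro n f
    rw [key]
    refine MeasurableSet.prod ?_ ?_
    · have : {ω | ∀ j < Nat.count (fun k => f k ∈ s) n,
        ((Y j ω : s) : V) = f (Nat.nth (fun k => f k ∈ s) j)} =
        ⋂ j, ⋂ (_ : j < Nat.count (fun k => f k ∈ s) n),
          ⋃ v : s, ⋃ (_ : (v : V) = f (Nat.nth (fun k => f k ∈ s) j)), {ω | Y j ω = v} := by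
        ext ω
        simp [-Subtype.exists]
      rw [this]
      exact MeasurableSet.iInter fun j => MeasurableSet.iInter fun _ =>
        MeasurableSet.iUnion fun v => MeasurableSet.iUnion fun _ => hY.1 _ _
    · have : {ω | ∀ k < n, C k ω ∈ (if f k ∈ s then s.toFinset else {f k})} =
        ⋂ k, ⋂ (_ : k < n),
          ⋃ v : V, ⋃ (_ : v ∈ (if f k ∈ s then s.toFinset else {f k})), {ω | C k ω = v} := by
        ext ω
        simp
      rw [this]
      exact MeasurableSet.iInter fun j => MeasurableSet.iInter fun _ =>
        MeasurableSet.iUnion fun v => MeasurableSet.iUnion fun _ => hC.1 _ _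
  refine ⟨fun n v => ?_, fun n f => ?_⟩
  · have : {ω : Ω₁ × Ω₂ | merge (fun j => Y j ω.1) (fun j => C j ω.2) n = v} =
        ⋃ F : Fin n → V, {ω : Ω₁ × Ω₂ | ∀ k < n + 1,
          merge (fun j => Y j ω.1) (fun j => C j ω.2) k =
            (if h : k < n then F ⟨k, h⟩ else v)} := by
      ext ω
      simp only [Set.mem_ofPred_eq, Set.mem_iUnion]
      constructor
      · intro h
        refine ⟨fun k => merge (fun j => Y j ω.1) (fun j => C j ω.2) k, fun k hk => ?_⟩
        split_ifs with hkn
        · rfl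
        · rw [show k = n by omega]; exact h
      · rintro ⟨F, h⟩
        simpa using h n (by omega)
    rw [this]
    exact MeasurableSet.iUnion fun F => hmeas (n + 1) _
  · rw [key, Measure.prod_prod, box hC]
    have h1 : μ {ω | ∀ j < Nat.count (fun k => f k ∈ s) n,
        ((Y j ω : s) : V) = f (Nat.nth (fun k => f k ∈ s) j)} =
        (Fintype.card s : ℝ≥0∞)⁻¹ ^ (Nat.count (fun k => f k ∈ s) n) := by
      rw [← hY.2 _ (fun j => if h : f (Nat.nth (fun k => f k ∈ s) j) ∈ s then ⟨_, h⟩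
        else Classical.arbitrary s)]
      congr 1
      ext ω
      simp only [Set.mem_ofPred_eq]
      refine forall_congr' fun j => forall_congr' fun hj => ?_
      have h := (nth_lemma _ _ _ hj).1
      rw [dif_pos h, Subtype.ext_iff]
    rw [h1]
    have hs0 : (Fintype.card s : ℝ≥0∞) ≠ 0 := by simp
    have hst : (Fintype.card s : ℝ≥0∞) ≠ ⊤ := by simp
    clear h1 hmeas key
    induction n with
    | zero => simp
    | succ n ih =>
      rw [Finset.prod_range_succ, Nat.count_succ, pow_succ _ n, ← ih]
      split_ifs with hf
      · rw [Set.toFinset_card, pow_succ]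
        calc _ = (Fintype.card s : ℝ≥0∞)⁻¹ ^ (Nat.count (fun k => f k ∈ s) n) *
            (∏ x ∈ Finset.range n, (((if f x ∈ s then s.toFinset else {f x}).card : ℝ≥0∞) *
              (Fintype.card V : ℝ≥0∞)⁻¹)) * (((Fintype.card s : ℝ≥0∞) *
              (Fintype.card s : ℝ≥0∞)⁻¹) * (Fintype.card V : ℝ≥0∞)⁻¹) := by ring
          _ = _ := by rw [ENNReal.mul_inv_cancel hs0 hst, one_mul]
      · simp [mul_assoc]
end prob
end BD
namespace BD

lemma key {V' : Type} [Fintype V'] [Nonempty V'] (G' : SimpleGraph V')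
    (s : Set V') (hs : s.Nonempty) (G : SimpleGraph s)
    (γ γ' : ℝ) (h : IsGrowthRate G γ) (h' : IsGrowthRate G' γ') (l : ℕ) (hl : 0 < l)
    (U : Fin l → V') :
    ∃ (Y : ℕ → s) (C : ℕ → V'),
      Tendsto (fun n : ℕ => (Fintype.card s : ℝ) *
          (⨆ x : s, (heightProcess G (fun _ => 0) Y n x : ℝ)) / n) atTop (𝓝 γ) ∧
      Tendsto (fun n : ℕ => (Fintype.card V' : ℝ) *
          (⨆ x : V', (heightProcess G' (fun _ => 0) (merge Y C) n x : ℝ)) / n) atTop (𝓝 γ') ∧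
      Tendsto (fun n : ℕ => (Nat.count (fun k => C k ∈ s) n : ℝ) / n) atTop
        (𝓝 ((Fintype.card s : ℝ) / Fintype.card V')) ∧
      Tendsto (fun j : ℕ => (∑ i ∈ Finset.range j,
        (if (fun r : Fin l => merge Y C (i * l + r)) = U then (1 : ℝ) else 0)) / j) atTop
        (𝓝 (1 / (Fintype.card V' : ℝ) ^ l)) := by
  haveI : Nonempty s := hs.to_subtype
  obtain ⟨_, μ, _, hY⟩ := exists_iid s
  obtain ⟨_, ν, _, hC⟩ := exists_iid V'
  have hX := merge_iid hY hC
  have a1 := Measure.quasiMeasurePreserving_fst (μ := μ) (ν := ν) |>.ae (h.2 μ _ hY).1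
  have a2 := (h'.2 (μ.prod ν) _ hX).1
  have a3 := Measure.quasiMeasurePreserving_snd (μ := μ) (ν := ν) |>.ae (lln hC s.toFinset)
  have a4 := lln (blocks hX l hl) {U}
  obtain ⟨ω, b1, b2, b3, b4⟩ := (a1.and (a2.and (a3.and a4))).exists
  refine ⟨ω.1, ω.2, b1, b2, ?_, ?_⟩
  · simp only [Set.mem_toFinset, Set.toFinset_card] at b3
    refine b3.congr fun n => ?_
    rw [Nat.count_eq_card_filter_range, Finset.sum_boole]
  · simpa using b4

lemma sup_lim {V' : Type} [Fintype V'] [Nonempty V']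
    (s : Set V') (hs : s.Nonempty) (G : SimpleGraph s) (γ : ℝ) (Y : ℕ → s) (C : ℕ → V')
    (h1 : Tendsto (fun n : ℕ => (Fintype.card s : ℝ) *
          (⨆ x : s, (heightProcess G (fun _ => 0) Y n x : ℝ)) / n) atTop (𝓝 γ))
    (h3 : Tendsto (fun n : ℕ => (Nat.count (fun k => C k ∈ s) n : ℝ) / n) atTop
        (𝓝 ((Fintype.card s : ℝ) / Fintype.card V'))) :
    Tendsto (fun n : ℕ => (Fintype.card V' : ℝ) *
      (⨆ x : s, (heightProcess (ext G) (fun _ => 0) (merge Y C) n x : ℝ)) / n) atTop (𝓝 γ) := by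
  haveI : Nonempty s := hs.to_subtype
  have ps : (0 : ℝ) < Fintype.card s := by exact_mod_cast Fintype.card_pos
  have pv : (0 : ℝ) < Fintype.card V' := by exact_mod_cast Fintype.card_pos
  have hN : Tendsto (fun n : ℕ => Nat.count (fun k => C k ∈ s) n) atTop atTop := by
    have := h3.pos_mul_atTop (div_pos ps pv) (tendsto_natCast_atTop_atTop (R := ℝ))
    rw [← tendsto_natCast_atTop_iff (R := ℝ)]
    refine this.congr' ?_
    filter_upwards [eventually_gt_atTop 0] with n hn
    have : (n : ℝ) ≠ 0 := by positivity
    field_simp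
  have h4 := ((h1.comp hN).mul h3).mul_const ((Fintype.card V' : ℝ) / Fintype.card s)
  have e : γ * ((Fintype.card s : ℝ) / Fintype.card V') * ((Fintype.card V' : ℝ) / Fintype.card s)
      = γ := by field_simp
  rw [e] at h4
  refine h4.congr' ?_
  filter_upwards [eventually_gt_atTop 0, hN.eventually_gt_atTop 0] with n hn hn'
  simp only [Function.comp, hp_merge]
  have : (n : ℝ) ≠ 0 := by positivity
  have : (Nat.count (fun k => C k ∈ s) n : ℝ) ≠ 0 := by positivity
  field_simp

end BD

theorem stmt12 {V' : Type} [Fintype V'] [Nonempty V'] (G' : SimpleGraph V')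
    (s : Set V') (hs : s.Nonempty) (G : SimpleGraph s)
    (hsub : ∀ x y : s, G.Adj x y → G'.Adj x y)
    (hG : G.Connected) (hG' : G'.Connected)
    (γ γ' : ℝ) (h : IsGrowthRate G γ) (h' : IsGrowthRate G' γ') :
    γ ≤ γ' ∧ (γ = γ' ↔ s = Set.univ ∧ ∀ x y : s, (G.Adj x y ↔ G'.Adj x y)) := by
  haveI : Nonempty s := hs.to_subtype
  have pv : (0 : ℝ) < Fintype.card V' := by exact_mod_cast Fintype.card_pos
  have hle : ∀ x y, (BD.ext G).Adj x y → G'.Adj x y := by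
    rintro x y ⟨hx, hy, hxy⟩
    exact hsub _ _ hxy
  -- comparison of suprema
  have hsup : ∀ (X : ℕ → V') (n k : ℕ), (∀ x, heightProcess (BD.ext G) (fun _ => 0) X n x + k ≤
      heightProcess G' (fun _ => 0) X n x) →
      (⨆ x : s, (heightProcess (BD.ext G) (fun _ => 0) X n x : ℝ)) + k ≤
      ⨆ x : V', (heightProcess G' (fun _ => 0) X n x : ℝ) := by
    intro X n k hk
    rw [← le_sub_iff_add_le]
    refine ciSup_le fun x => ?_
    rw [le_sub_iff_add_le]
    refine le_trans ?_ (le_ciSup (Set.finite_range _).bddAbove (x : V'))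
    exact_mod_cast hk x
  have hγ : γ ≤ γ' := by
    obtain ⟨Y, C, h1, h2, h3, -⟩ := BD.key G' s hs G γ γ' h h' 1 one_pos
      (fun _ => Classical.arbitrary V')
    refine le_of_tendsto_of_tendsto' (BD.sup_lim s hs G γ Y C h1 h3) h2 fun n => ?_
    have := hsup (BD.merge Y C) n 0 (fun x => by
      have := BD.hp_mono hle (fun _ => 0) (BD.merge Y C) 0 0 n (fun _ => le_rfl) x
      simpa using this)
    simp only [Nat.cast_zero, add_zero] at this
    gcongr
  refine ⟨hγ, ?_, ?_⟩
  · intro heq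
    by_contra hne
    obtain ⟨a, b, hab, hab'⟩ : ∃ a b, ¬ (BD.ext G).Adj a b ∧ G'.Adj a b := by
      by_contra! hcon
      have hs' : s = Set.univ := by
        have step : ∀ x y, G'.Reachable x y → x ∈ s → y ∈ s := by
          rintro x y ⟨p⟩ hx
          induction p with
          | nil => exact hx
          | @cons u v w huv p ih =>
            apply ih
            by_contra hv
            exact hcon u v (fun hadj => hv hadj.2.1) huv
        obtain ⟨x0, hx0⟩ := hs
        exact Set.eq_univ_of_forall fun y => step x0 y (hG'.preconnected x0 y) hx0
      refine hne ⟨hs', fun x y => ⟨hsub x y, fun hxy => ?_⟩⟩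
      by_contra hn
      exact hcon x y (fun hadj => hn hadj.2.2) hxy
    obtain ⟨Q, hQ0, hQ⟩ := BD.exists_gain (BD.ext G) G' hG' hab hab'
    have hl : 0 < Q.length := List.length_pos_of_ne_nil hQ0
    have hl' : (0 : ℝ) < Q.length := by exact_mod_cast hl
    obtain ⟨Y, C, h1, h2, h3, h4⟩ := BD.key G' s hs G γ γ' h h' Q.length hl Q.get
    have h5 := BD.sup_lim s hs G γ Y C h1 h3
    have hmul : Tendsto (fun j : ℕ => j * Q.length) atTop atTop :=
      tendsto_id.atTop_mul_const' hl
    have h6 := (h5.comp hmul).add (h4.const_mul ((Fintype.card V' : ℝ) / Q.length))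
    have h7 := le_of_tendsto_of_tendsto' h6 (h2.comp hmul) fun j => ?_
    · have : 0 < (Fintype.card V' : ℝ) / Q.length * (1 / (Fintype.card V' : ℝ) ^ Q.length) := by
        positivity
      linarith
    · have := hsup (BD.merge Y C) (j * Q.length) _
        (BD.hp_gap hle (fun _ => 0) (BD.merge Y C) Q hQ j)
      push_cast at this
      simp only [Function.comp]
      push_cast
      rw [div_mul_div_comm, mul_comm (Q.length : ℝ) (j : ℝ), ← add_div, ← mul_add]
      gcongr
  · rintro ⟨hs', hadj⟩
    have hE : BD.ext G = G' := by
      ext x y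
      refine ⟨hle x y, fun hxy => ?_⟩
      have hx : x ∈ s := hs' ▸ Set.mem_univ x
      have hy : y ∈ s := hs' ▸ Set.mem_univ y
      exact ⟨hx, hy, (hadj ⟨x, hx⟩ ⟨y, hy⟩).2 hxy⟩
    obtain ⟨Y, C, h1, h2, h3, -⟩ := BD.key G' s hs G γ γ' h h' 1 one_pos
      (fun _ => Classical.arbitrary V')
    refine le_antisymm hγ (le_of_tendsto_of_tendsto' h2 (BD.sup_lim s hs G γ Y C h1 h3)
      fun n => ?_)
    rw [hE]
    have : (⨆ x : V', (heightProcess G' (fun _ => 0) (BD.merge Y C) n x : ℝ)) ≤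
        ⨆ x : s, (heightProcess G' (fun _ => 0) (BD.merge Y C) n x : ℝ) := by
      refine ciSup_le fun x => ?_
      exact le_ciSup (f := fun x : s => (heightProcess G' (fun _ => 0) (BD.merge Y C) n x : ℝ))
        (Set.finite_range _).bddAbove ⟨x, hs' ▸ Set.mem_univ x⟩
    gcongr
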